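/- (Theorem 1, continuity in energy capacity.) Fix x̄ ≥ 0 and 0 ≤ S0, and define v(S̄) as the infimum of V(S) over feasible profiles. Then v is continuous on [S0, ∞); hence the system EUE, equal to ∑_t p⁻ t + v(S̄), is a continuous function of the energy capacity. -/

import Mathlib

/-!
The optimal value is Lipschitz in the energy capacity. If `S` is feasible for capacity `b` and
`S0 ≤ a`, then `min S a` is feasible for capacity `a`, because truncation moves every increment
towards zero without changing its sign. As `S ≤ b`, truncation lowers each state of charge by at
most `|a - b|`, so each of the `T` summands of the objective grows by at most `|a - b|`; taking
infima bounds the optimal value for `a` by the one for `b` plus `T * |a - b|`.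
-/

/-- Feasibility for the single-storage reliability-dispatch problem. -/
def Feasible (T : ℕ) (pp pm : Fin T → ℝ) (S0 Sb xb : ℝ)
    (S : Fin (T + 1) → ℝ) : Prop :=
  S 0 = S0 ∧ ∀ t : Fin T,
    (0 ≤ S t.succ ∧ S t.succ ≤ Sb) ∧
    |S t.succ - S t.castSucc| ≤ xb ∧
    (-(pm t) ≤ S t.succ - S t.castSucc ∧ S t.succ - S t.castSucc ≤ pp t)

/-- The objective `V(S) = ∑ₜ min 0 (S (t+1) − S t)`. -/
noncomputable def V (T : ℕ) (S : Fin (T + 1) → ℝ) : ℝ :=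
  ∑ t : Fin T, min 0 (S t.succ - S t.castSucc)

section OrderedGroup

variable {α : Type*} [AddCommGroup α] [LinearOrder α] [IsOrderedAddMonoid α]

lemma min_sub_min_le_max_zero_sub (x y a : α) : min y a - min x a ≤ max 0 (y - x) := by
  rw [sub_le_iff_le_add, ← min_add_add_left]
  exact min_le_min (sub_le_iff_le_add.mp (le_max_right 0 (y - x)))
    (le_add_of_nonneg_left (le_max_left 0 (y - x)))

lemma min_zero_sub_le_min_sub_min (x y a : α) : min 0 (y - x) ≤ min y a - min x a := by
  rw [le_sub_iff_add_le]
  exact le_min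
    ((add_le_add (min_le_right 0 (y - x)) (min_le_left x a)).trans_eq (sub_add_cancel y x))
    ((add_le_add (min_le_left 0 (y - x)) (min_le_right x a)).trans_eq (zero_add a))

end OrderedGroup

lemma V_le_V_add_mul {T : ℕ} {S S' : Fin (T + 1) → ℝ} {c : ℝ}
    (hle : ∀ i, S' i ≤ S i) (hadd : ∀ i, S i ≤ S' i + c) : V T S' ≤ V T S + T * c := by
  have hterm (t : Fin T) :
      min 0 (S' t.succ - S' t.castSucc) ≤ min 0 (S t.succ - S t.castSucc) + c := by
    rw [← min_add_add_right]
    exact min_le_min (by linarith [hle 0, hadd 0]) (by linarith [hle t.succ, hadd t.castSucc])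
  calc V T S' ≤ ∑ t : Fin T, (min 0 (S t.succ - S t.castSucc) + c) :=
        Finset.sum_le_sum fun t _ => hterm t
    _ = V T S + T * c := by simp [V, Finset.sum_add_distrib]

section Dispatch

variable {T : ℕ} {pp pm : Fin T → ℝ} {S0 a b xb : ℝ} {S : Fin (T + 1) → ℝ}

lemma feasible_const (hpp : ∀ t, 0 ≤ pp t) (hpm : ∀ t, 0 ≤ pm t) (hS0 : 0 ≤ S0) (hxb : 0 ≤ xb)
    (hb : S0 ≤ b) : Feasible T pp pm S0 b xb fun _ => S0 :=
  ⟨rfl, fun t => by simp [hS0, hb, hxb, hpp t, hpm t]⟩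

namespace Feasible

lemma le_capacity (hS : Feasible T pp pm S0 b xb S) (hb : S0 ≤ b) (i : Fin (T + 1)) : S i ≤ b :=
  Fin.cases (hS.1.trans_le hb) (fun t => (hS.2 t).1.2) i

lemma neg_mul_le_V (hS : Feasible T pp pm S0 b xb S) : -(T * xb) ≤ V T S := by
  have hterm (t : Fin T) : -xb ≤ min 0 (S t.succ - S t.castSucc) :=
    have hpower := (hS.2 t).2.1
    le_min (neg_nonpos.mpr ((abs_nonneg _).trans hpower)) (abs_le.mp hpower).1
  calc -(T * xb) = ∑ _t : Fin T, -xb := by simp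
    _ ≤ V T S := Finset.sum_le_sum fun t _ => hterm t

lemma truncate (hS : Feasible T pp pm S0 b xb S) (hpp : ∀ t, 0 ≤ pp t) (hpm : ∀ t, 0 ≤ pm t)
    (ha : 0 ≤ a) (hS0a : S0 ≤ a) : Feasible T pp pm S0 a xb fun i => min (S i) a := by
  refine ⟨by simp only [hS.1, min_eq_left hS0a], fun t => ?_⟩
  obtain ⟨⟨hnonneg, -⟩, hpower, hdischarge, hcharge⟩ := hS.2 t
  exact ⟨⟨le_min hnonneg ha, min_le_right _ _⟩,
    (abs_inf_sub_inf_le_abs _ _ a).trans hpower,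
    (le_min (neg_nonpos.mpr (hpm t)) hdischarge).trans (min_zero_sub_le_min_sub_min _ _ a),
    (min_sub_min_le_max_zero_sub _ _ a).trans (max_le (hpp t) hcharge)⟩

lemma V_truncate_le (hS : Feasible T pp pm S0 b xb S) (hb : S0 ≤ b) (a : ℝ) :
    V T (fun i => min (S i) a) ≤ V T S + T * |a - b| := by
  refine V_le_V_add_mul (fun i => min_le_left _ _) fun i => ?_
  rw [← min_add_add_right]
  exact le_min (le_add_of_nonneg_right (abs_nonneg _))
    (by linarith [hS.le_capacity hb i, neg_abs_le (a - b)])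

end Feasible

/-- The optimal value `v(S̄)` of the dispatch problem as a function of the energy capacity `S̄`,
which is the last argument. It is the junk value `0` if no profile is feasible. -/
noncomputable def optimalValue (T : ℕ) (pp pm : Fin T → ℝ) (S0 xb Sb : ℝ) : ℝ :=
  sInf {r : ℝ | ∃ S : Fin (T + 1) → ℝ, Feasible T pp pm S0 Sb xb S ∧ V T S = r}

lemma optimalValue_le (hS : Feasible T pp pm S0 b xb S) : optimalValue T pp pm S0 xb b ≤ V T S :=
  csInf_le ⟨-(T * xb), by rintro _ ⟨S', hS', rfl⟩; exact hS'.neg_mul_le_V⟩ ⟨S, hS, rfl⟩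

lemma optimalValue_le_add_mul (hpp : ∀ t, 0 ≤ pp t) (hpm : ∀ t, 0 ≤ pm t) (hS0 : 0 ≤ S0)
    (hxb : 0 ≤ xb) (ha : S0 ≤ a) (hb : S0 ≤ b) :
    optimalValue T pp pm S0 xb a ≤ optimalValue T pp pm S0 xb b + T * |a - b| := by
  rw [← sub_le_iff_le_add]
  refine le_csInf ⟨_, _, feasible_const hpp hpm hS0 hxb hb, rfl⟩ ?_
  rintro _ ⟨S, hS, rfl⟩
  rw [sub_le_iff_le_add]
  calc optimalValue T pp pm S0 xb a ≤ V T fun i => min (S i) a :=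
        optimalValue_le (hS.truncate hpp hpm (hS0.trans ha) ha)
    _ ≤ V T S + T * |a - b| := hS.V_truncate_le hb a

theorem lipschitzOnWith_optimalValue (hpp : ∀ t, 0 ≤ pp t) (hpm : ∀ t, 0 ≤ pm t) (hS0 : 0 ≤ S0)
    (hxb : 0 ≤ xb) : LipschitzOnWith T (optimalValue T pp pm S0 xb) (Set.Ici S0) :=
  LipschitzOnWith.of_le_add_mul _ fun _ ha _ hb =>
    optimalValue_le_add_mul hpp hpm hS0 hxb ha hb

end Dispatch

/-- Theorem 1 (continuity in energy capacity): the optimal value `v(S̄)` is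
continuous on `[S0, ∞)`, hence the EUE `∑ₜ p⁻ t + v(S̄)` is a continuous
function of the energy capacity. -/
theorem optimalValue_continuousOn_energy (T : ℕ) (pp pm : Fin T → ℝ)
    (hpp : ∀ t, 0 ≤ pp t) (hpm : ∀ t, 0 ≤ pm t)
    (S0 xb : ℝ) (hS0 : 0 ≤ S0) (hxb : 0 ≤ xb) :
    ContinuousOn
      (fun Sb => sInf {r : ℝ | ∃ S : Fin (T + 1) → ℝ,
        Feasible T pp pm S0 Sb xb S ∧ V T S = r})
      (Set.Ici S0) ∧
    ContinuousOn
      (fun Sb => (∑ t : Fin T, pm t) +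
        sInf {r : ℝ | ∃ S : Fin (T + 1) → ℝ,
          Feasible T pp pm S0 Sb xb S ∧ V T S = r})
      (Set.Ici S0) := by
  have hcont : ContinuousOn (optimalValue T pp pm S0 xb) (Set.Ici S0) :=
    (lipschitzOnWith_optimalValue hpp hpm hS0 hxb).continuousOn
  exact ⟨hcont, continuousOn_const.add hcont⟩
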